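/- Let k ≥ 2, let (X,π) be a weighted pure k-partite complex that is a λ-product for some λ ∈ (0,1), let r ≥ 0 satisfy 2r+2 ≤ k and (k−r)·λ < 1, and let J be a set of m ≥ 2 pairwise disjoint (r+1)-element subsets of {1,…,k}. Then the colored faces complex F^J X is a ((r+1)·λ/(1−(k−r)·λ))-one-sided local spectral expander; explicitly, for every face σ of F^J X with |σ| ≤ m−2 the following holds: sample a maximal face of F^J X from its distribution conditioned on containing σ, let (b,b′) be a uniformly random ordered pair of distinct blocks of the sampled maximal face not in σ, and let π₀ be a uniformly random single such block; then every f from the vertices of the link of σ in F^J X to ℝ with E_{π₀}[f] = 0 satisfies E[f(b)·f(b′)] ≤ ((r+1)·λ/(1−(k−r)·λ))·E_{π₀}[f²]. -/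

import Mathlib

open Finset
open scoped Classical

/-- The maximal faces of a finite simplicial complex `X`. -/
noncomputable def maxFacesOf (V : Type) [Fintype V] (X : Finset (Finset V)) :
    Finset (Finset V) :=
  X.filter fun T => ∀ τ ∈ X, T ⊆ τ → τ = T

/-- The maximal faces of `X` containing the face `τ`. -/
noncomputable def condTops (V : Type) [Fintype V] (X : Finset (Finset V))
    (τ : Finset V) : Finset (Finset V) :=
  (maxFacesOf V X).filter fun T => τ ⊆ T

/-- The sum of `f` over the vertices of color `a` in `T` (for a maximal face of a partite
complex, this is the value of `f` at the unique vertex of `T` of color `a`). -/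
noncomputable def colorSum (V : Type) [Fintype V] (k : ℕ) (col : V → Fin k)
    (T : Finset V) (a : Fin k) (f : V → ℝ) : ℝ :=
  ∑ v ∈ T.filter (fun v => col v = a), f v

/-- `(X, π)` is a `λ`-product: for every face `τ` of codimension at least `2` and all
distinct colors `a, b` not used by `τ`, the bipartite graph between colors `a` and `b` of
the link of `τ` has normalized second eigenvalue at most `λ`, stated in Rayleigh-quotient
form (sampling a maximal face `T ∼ π` conditioned on `T ⊇ τ`). -/
def IsLambdaProduct (V : Type) [Fintype V] (k : ℕ) (col : V → Fin k)
    (X : Finset (Finset V)) (π : Finset V → ℝ) (lam : ℝ) : Prop :=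
  ∀ τ ∈ X, τ.card + 2 ≤ k → ∀ a b : Fin k, a ≠ b →
    a ∉ τ.image col → b ∉ τ.image col →
    ∀ f : V → ℝ,
      (∑ T ∈ condTops V X τ,
          π T * ((colorSum V k col T a f + colorSum V k col T b f) / 2)) /
        (∑ T ∈ condTops V X τ, π T) = 0 →
      (∑ T ∈ condTops V X τ,
          π T * (colorSum V k col T a f * colorSum V k col T b f)) /
        (∑ T ∈ condTops V X τ, π T)
        ≤ lam *
          ((∑ T ∈ condTops V X τ,
              π T * ((colorSum V k col T a (fun v => (f v) ^ 2) +
                colorSum V k col T b (fun v => (f v) ^ 2)) / 2)) /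
            (∑ T ∈ condTops V X τ, π T))

/-- The block of color-set `c` of a maximal face `T`: its vertices with colors in `c`. -/
noncomputable def blockOf (V : Type) [Fintype V] (k : ℕ) (col : V → Fin k)
    (T : Finset V) (c : Finset (Fin k)) : Finset V :=
  T.filter fun v => col v ∈ c

/-- The maximal faces of `X` whose `J`-blocks contain all blocks of `σ`. -/
noncomputable def condTopsF (V : Type) [Fintype V] (X : Finset (Finset V))
    (σ : Finset (Finset V)) : Finset (Finset V) :=
  (maxFacesOf V X).filter fun T => ∀ s ∈ σ, s ⊆ T

/-- The color-sets of `J` not used by the blocks of `σ`. -/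
noncomputable def remColors (V : Type) [Fintype V] (k : ℕ) (col : V → Fin k)
    (J : Finset (Finset (Fin k))) (σ : Finset (Finset V)) : Finset (Finset (Fin k)) :=
  J \ σ.image (fun s => s.image col)

/-- `E_{π₀}[f]`: sample a maximal face of `F^J X` conditioned on containing `σ`
(equivalently, `T ∼ π` with all blocks of `σ` inside `T`), then a uniformly random block
of it not in `σ`. -/
noncomputable def facesVertExp (V : Type) [Fintype V] (k : ℕ) (col : V → Fin k)
    (X : Finset (Finset V)) (π : Finset V → ℝ) (J : Finset (Finset (Fin k)))
    (σ : Finset (Finset V)) (f : Finset V → ℝ) : ℝ :=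
  (∑ T ∈ condTopsF V X σ,
      π T * ((∑ c ∈ remColors V k col J σ, f (blockOf V k col T c)) /
        ((remColors V k col J σ).card : ℝ))) /
    (∑ T ∈ condTopsF V X σ, π T)

/-- `E[f(b)·g(b′)]`: sample a maximal face of `F^J X` conditioned on containing `σ`, then a
uniformly random ordered pair of distinct blocks of it not in `σ`. -/
noncomputable def facesPairExp (V : Type) [Fintype V] (k : ℕ) (col : V → Fin k)
    (X : Finset (Finset V)) (π : Finset V → ℝ) (J : Finset (Finset (Fin k)))
    (σ : Finset (Finset V)) (f g : Finset V → ℝ) : ℝ :=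
  (∑ T ∈ condTopsF V X σ,
      π T * ((∑ c ∈ remColors V k col J σ, ∑ c' ∈ (remColors V k col J σ).erase c,
          f (blockOf V k col T c) * g (blockOf V k col T c')) /
        (((remColors V k col J σ).card : ℝ) * (((remColors V k col J σ).card : ℝ) - 1)))) /
    (∑ T ∈ condTopsF V X σ, π T)

/-!
For sets `A`, `B` of colors not used by a face `τ`, functions `F` of the `A`-block and `G` of the
`B`-block of a random maximal face containing `τ` satisfy `2 Cov(F, G) ≤ λ (|B| Var F + |A| Var G)`.
For singletons `A`, `B` this is the `λ`-product condition. To add a color `a` to `A`, condition on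
the vertex of color `a`: by the law of total covariance, `Cov(F, G)` is the sum of the covariances
inside the links of these vertices, which the induction hypothesis controls, and of the covariance
with `G` of the conditional mean of `F`, a function of the vertex of color `a` only. No loss
accumulates along the links, so the expansion constant obtained is `(r + 1) λ`, without the
denominator `1 - (k - r) λ`.

Expanding `E[f(b) f(b')]` into covariances and products of means, the latter contribute
`(∑ m_c)² - ∑ m_c² ≤ 0`, because the overall mean `∑ m_c` vanishes.
-/

section WeightedCovariance

variable {Ω κ : Type*} {w : Ω → ℝ} {S : Finset Ω}

/-- The covariance of `F` and `G` for the weights `w` on `S`. It is not divided by the total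
weight, so that the covariances on the parts of a partition of `S` simply add up. -/
noncomputable def weightedCov (w : Ω → ℝ) (S : Finset Ω) (F G : Ω → ℝ) : ℝ :=
  ∑ T ∈ S, w T * ((F T - S.centerMass w F) * (G T - S.centerMass w G))

theorem sum_weight_mul_centerMass (hw : ∀ T ∈ S, 0 ≤ w T) (F : Ω → ℝ) :
    (∑ T ∈ S, w T) * S.centerMass w F = ∑ T ∈ S, w T * F T := by
  simp only [centerMass, smul_eq_mul]
  rcases eq_or_ne (∑ T ∈ S, w T) 0 with hW | hW
  · have hw0 := (sum_eq_zero_iff_of_nonneg hw).1 hW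
    rw [hW, zero_mul, sum_eq_zero fun T hT => by rw [hw0 T hT, zero_mul]]
  · rw [mul_inv_cancel_left₀ hW]

theorem sum_mul_sub_centerMass (hw : ∀ T ∈ S, 0 ≤ w T) (F : Ω → ℝ) :
    ∑ T ∈ S, w T * (F T - S.centerMass w F) = 0 := by
  simp only [mul_sub, sum_sub_distrib, ← sum_mul, sum_weight_mul_centerMass hw, sub_self]

theorem weightedCov_eq_sub (hw : ∀ T ∈ S, 0 ≤ w T) (F G : Ω → ℝ) :
    weightedCov w S F G = ∑ T ∈ S, w T * (F T * G T) -
      (∑ T ∈ S, w T) * (S.centerMass w F * S.centerMass w G) := by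
  have hexpand : ∀ T, w T * ((F T - S.centerMass w F) * (G T - S.centerMass w G)) =
      w T * (F T * G T) - S.centerMass w F * (w T * G T) -
        S.centerMass w G * (w T * (F T - S.centerMass w F)) := fun T => by ring
  simp only [weightedCov, hexpand, sum_sub_distrib, ← mul_sum, sum_mul_sub_centerMass hw,
    ← sum_weight_mul_centerMass hw G]
  ring

theorem weightedCov_comm (F G : Ω → ℝ) : weightedCov w S F G = weightedCov w S G F := by
  simp only [weightedCov, mul_comm (F _ - _)]

theorem weightedCov_congr_left {F F' : Ω → ℝ} (h : ∀ T ∈ S, F T = F' T) (G : Ω → ℝ) :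
    weightedCov w S F G = weightedCov w S F' G := by
  have hmean : S.centerMass w F = S.centerMass w F' := centerMass_congr_fun fun T hT _ => h T hT
  simp only [weightedCov, hmean]
  exact sum_congr rfl fun T hT => by rw [h T hT]

theorem weightedCov_congr {F F' G G' : Ω → ℝ} (hF : ∀ T ∈ S, F T = F' T)
    (hG : ∀ T ∈ S, G T = G' T) : weightedCov w S F G = weightedCov w S F' G' := by
  rw [weightedCov_congr_left hF, weightedCov_comm, weightedCov_congr_left hG, weightedCov_comm]

theorem weightedCov_const_left (hw : ∀ T ∈ S, 0 ≤ w T) (x : ℝ) (G : Ω → ℝ) :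
    weightedCov w S (fun _ => x) G = 0 := by
  rw [weightedCov_eq_sub hw, sub_eq_zero, ← mul_assoc, sum_weight_mul_centerMass hw, ← sum_mul,
    mul_right_comm, sum_weight_mul_centerMass hw, sum_mul]
  exact sum_congr rfl fun T _ => by ring

theorem weightedCov_self_nonneg (hw : ∀ T ∈ S, 0 ≤ w T) (F : Ω → ℝ) : 0 ≤ weightedCov w S F F :=
  sum_nonneg fun T hT => mul_nonneg (hw T hT) (mul_self_nonneg _)

theorem weightedCov_self_le (hw : ∀ T ∈ S, 0 ≤ w T) (F : Ω → ℝ) :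
    weightedCov w S F F ≤ ∑ T ∈ S, w T * F T ^ 2 := by
  simp only [weightedCov_eq_sub hw, ← sq]
  exact sub_le_self _ (mul_nonneg (sum_nonneg hw) (sq_nonneg _))

variable [DecidableEq κ]

/-- The conditional expectation of `F` given `key`, for the weights `w` on `S`. -/
noncomputable def fiberMean (w : Ω → ℝ) (S : Finset Ω) (key : Ω → κ) (F : Ω → ℝ) (T : Ω) : ℝ :=
  {T' ∈ S | key T' = key T}.centerMass w F

theorem sum_image_sum_fiber (key : Ω → κ) (F : Ω → ℝ) :
    ∑ s ∈ S.image key, ∑ T ∈ S with key T = s, F T = ∑ T ∈ S, F T :=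
  sum_fiberwise_of_maps_to (fun _ => mem_image_of_mem key) F

theorem sum_congr_fibers (key : Ω → κ) {F G : Ω → ℝ}
    (h : ∀ s, ∑ T ∈ S with key T = s, F T = ∑ T ∈ S with key T = s, G T) :
    ∑ T ∈ S, F T = ∑ T ∈ S, G T := by
  rw [← sum_image_sum_fiber key F, ← sum_image_sum_fiber key G]
  exact sum_congr rfl fun s _ => h s

theorem sum_fiber_mul_fiberMean_mul (key : Ω → κ) (F G : Ω → ℝ) (s : κ) :
    ∑ T ∈ S with key T = s, w T * (fiberMean w S key F T * G T) =
      {T ∈ S | key T = s}.centerMass w F * ∑ T ∈ S with key T = s, w T * G T := by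
  rw [mul_sum]
  refine sum_congr rfl fun T hT => ?_
  simp only [fiberMean, (mem_filter.1 hT).2, mul_left_comm]

theorem sum_fiber_mul_fiberMean (hw : ∀ T ∈ S, 0 ≤ w T) (key : Ω → κ) (F : Ω → ℝ) (s : κ) :
    ∑ T ∈ S with key T = s, w T * fiberMean w S key F T = ∑ T ∈ S with key T = s, w T * F T := by
  rw [← sum_weight_mul_centerMass (fun T hT => hw T (mem_filter.1 hT).1) F, mul_comm]
  simpa only [mul_one] using sum_fiber_mul_fiberMean_mul key F (fun _ => 1) s

theorem centerMass_fiberMean (hw : ∀ T ∈ S, 0 ≤ w T) (key : Ω → κ) (F : Ω → ℝ) :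
    S.centerMass w (fiberMean w S key F) = S.centerMass w F := by
  simp only [centerMass, smul_eq_mul]
  rw [sum_congr_fibers key (sum_fiber_mul_fiberMean hw key F)]

theorem weightedCov_eq_sum_fibers_add (hw : ∀ T ∈ S, 0 ≤ w T) (key : Ω → κ) (F G : Ω → ℝ) :
    weightedCov w S F G = ∑ s ∈ S.image key, weightedCov w {T ∈ S | key T = s} F G +
      weightedCov w S (fiberMean w S key F) G := by
  have hfiber : ∀ s, weightedCov w {T ∈ S | key T = s} F G =
      ∑ T ∈ S with key T = s, w T * (F T * G T) -
        ∑ T ∈ S with key T = s, w T * (fiberMean w S key F T * G T) := fun s => by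
    have hws : ∀ T ∈ ({T ∈ S | key T = s} : Finset Ω), 0 ≤ w T :=
      fun T hT => hw T (mem_filter.1 hT).1
    rw [weightedCov_eq_sub hws, sum_fiber_mul_fiberMean_mul, ← sum_weight_mul_centerMass hws G,
      mul_left_comm]
  simp only [hfiber, sum_sub_distrib, sum_image_sum_fiber, weightedCov_eq_sub hw,
    centerMass_fiberMean hw]
  ring

theorem weightedCov_fiberMean_fiberMean (hw : ∀ T ∈ S, 0 ≤ w T) (key : Ω → κ) (F G : Ω → ℝ) :
    weightedCov w S (fiberMean w S key F) (fiberMean w S key G) =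
      weightedCov w S (fiberMean w S key F) G := by
  rw [weightedCov_eq_sub hw, weightedCov_eq_sub hw, centerMass_fiberMean hw key G]
  congr 1
  exact sum_congr_fibers key fun s => by
    rw [sum_fiber_mul_fiberMean_mul, sum_fiber_mul_fiberMean_mul, sum_fiber_mul_fiberMean hw]

theorem weightedCov_self_eq_sum_fibers_add (hw : ∀ T ∈ S, 0 ≤ w T) (key : Ω → κ) (F : Ω → ℝ) :
    weightedCov w S F F = ∑ s ∈ S.image key, weightedCov w {T ∈ S | key T = s} F F +
      weightedCov w S (fiberMean w S key F) (fiberMean w S key F) := by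
  rw [weightedCov_fiberMean_fiberMean hw, ← weightedCov_eq_sum_fibers_add hw]

theorem two_mul_weightedCov_le_of_fibers (hw : ∀ T ∈ S, 0 ≤ w T) (key : Ω → κ) {F G : Ω → ℝ}
    {x y z : ℝ} (hy : 0 ≤ y)
    (hfibers : ∀ s ∈ S.image key, 2 * weightedCov w {T ∈ S | key T = s} F G ≤
      x * weightedCov w {T ∈ S | key T = s} F F + y * weightedCov w {T ∈ S | key T = s} G G)
    (hmean : 2 * weightedCov w S (fiberMean w S key F) G ≤
      x * weightedCov w S (fiberMean w S key F) (fiberMean w S key F) +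
        z * weightedCov w S G G) :
    2 * weightedCov w S F G ≤ x * weightedCov w S F F + (y + z) * weightedCov w S G G := by
  have hsum := sum_le_sum hfibers
  simp only [← mul_sum, sum_add_distrib] at hsum
  have hG : y * ∑ s ∈ S.image key, weightedCov w {T ∈ S | key T = s} G G ≤
      y * weightedCov w S G G := by
    rw [weightedCov_self_eq_sum_fibers_add hw key G]
    exact mul_le_mul_of_nonneg_left (le_add_of_nonneg_right (weightedCov_self_nonneg hw _)) hy
  rw [weightedCov_eq_sum_fibers_add hw key F G, weightedCov_self_eq_sum_fibers_add hw key F]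
  linarith

end WeightedCovariance

section Averaging

variable {κ : Type*} [DecidableEq κ]

theorem sum_sum_erase_mul (R : Finset κ) (x : κ → ℝ) :
    ∑ c ∈ R, x c * ∑ c' ∈ R.erase c, x c' = (∑ c ∈ R, x c) ^ 2 - ∑ c ∈ R, x c ^ 2 := by
  rw [sq, sum_mul, ← sum_sub_distrib]
  refine sum_congr rfl fun c hc => ?_
  rw [sum_erase_eq_sub hc]
  ring

theorem sum_sum_erase_add (R : Finset κ) (x : κ → ℝ) :
    ∑ c ∈ R, ∑ c' ∈ R.erase c, (x c + x c') = 2 * ((R.card : ℝ) - 1) * ∑ c ∈ R, x c := by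
  have hrow : ∀ c ∈ R, ∑ c' ∈ R.erase c, (x c + x c') =
      ((R.card : ℝ) - 2) * x c + ∑ c' ∈ R, x c' := fun c hc => by
    rw [sum_erase_eq_sub hc, sum_add_distrib, sum_const, nsmul_eq_mul]
    ring
  rw [sum_congr rfl hrow, sum_add_distrib, ← mul_sum, sum_const, nsmul_eq_mul]
  ring

theorem sum_sum_erase_sum_mul_le {Ω : Type*} {w : Ω → ℝ} {S : Finset Ω} (hw : ∀ T ∈ S, 0 ≤ w T)
    {R : Finset κ} {F : κ → Ω → ℝ} {x : ℝ} (hx : 0 ≤ x)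
    (hcov : ∀ c ∈ R, ∀ c' ∈ R, c ≠ c' → 2 * weightedCov w S (F c) (F c') ≤
      x * (weightedCov w S (F c) (F c) + weightedCov w S (F c') (F c')))
    (hmean : ∑ c ∈ R, ∑ T ∈ S, w T * F c T = 0) :
    ∑ c ∈ R, ∑ c' ∈ R.erase c, ∑ T ∈ S, w T * (F c T * F c' T) ≤
      x * ((R.card : ℝ) - 1) * ∑ c ∈ R, ∑ T ∈ S, w T * F c T ^ 2 := by
  set W := ∑ T ∈ S, w T with hW
  set m : κ → ℝ := fun c => S.centerMass w (F c) with hm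
  set Q : κ → ℝ := fun c => ∑ T ∈ S, w T * F c T ^ 2
  have hpair : ∀ c ∈ R, ∀ c' ∈ R.erase c, ∑ T ∈ S, w T * (F c T * F c' T) ≤
      x / 2 * (Q c + Q c') + W * (m c * m c') := fun c hc c' hc' => by
    have hle := hcov c hc c' (mem_of_mem_erase hc') (ne_of_mem_erase hc').symm
    have hvar := mul_le_mul_of_nonneg_left
      (add_le_add (weightedCov_self_le hw (F c)) (weightedCov_self_le hw (F c'))) hx
    have hsplit := weightedCov_eq_sub hw (F c) (F c')
    linarith
  have hexpand : ∑ c ∈ R, ∑ c' ∈ R.erase c, (x / 2 * (Q c + Q c') + W * (m c * m c')) =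
      x / 2 * ∑ c ∈ R, ∑ c' ∈ R.erase c, (Q c + Q c') +
        W * ∑ c ∈ R, m c * ∑ c' ∈ R.erase c, m c' := by
    simp only [mul_sum, ← sum_add_distrib]
  have hmeans : W * (∑ c ∈ R, m c) = 0 := by
    simpa only [hm, mul_sum, hW, sum_weight_mul_centerMass hw] using hmean
  have hmeans_sq : 0 ≤ W * ∑ c ∈ R, m c ^ 2 :=
    mul_nonneg (sum_nonneg hw) (sum_nonneg fun c _ => sq_nonneg _)
  calc ∑ c ∈ R, ∑ c' ∈ R.erase c, ∑ T ∈ S, w T * (F c T * F c' T)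
      ≤ ∑ c ∈ R, ∑ c' ∈ R.erase c, (x / 2 * (Q c + Q c') + W * (m c * m c')) :=
        sum_le_sum fun c hc => sum_le_sum (hpair c hc)
    _ = x * ((R.card : ℝ) - 1) * ∑ c ∈ R, Q c +
          (W * ∑ c ∈ R, m c) * ∑ c ∈ R, m c - W * ∑ c ∈ R, m c ^ 2 := by
        rw [hexpand, sum_sum_erase_add, sum_sum_erase_mul]
        ring
    _ ≤ x * ((R.card : ℝ) - 1) * ∑ c ∈ R, Q c := by
        rw [hmeans, zero_mul, add_zero]
        exact sub_le_self _ hmeans_sq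

end Averaging

section BlockCovariance

variable {V : Type} [Fintype V] {k : ℕ} {col : V → Fin k} {X : Finset (Finset V)}
  {π : Finset V → ℝ} {lam : ℝ} {τ : Finset V}

theorem mem_condTops {T : Finset V} : T ∈ condTops V X τ ↔ T ∈ maxFacesOf V X ∧ τ ⊆ T :=
  mem_filter

theorem blockOf_subset (T : Finset V) (A : Finset (Fin k)) : blockOf V k col T A ⊆ T :=
  filter_subset _ _

theorem blockOf_insert (T : Finset V) (a : Fin k) (A : Finset (Fin k)) :
    blockOf V k col T (insert a A) = blockOf V k col T {a} ∪ blockOf V k col T A := by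
  ext v
  simp only [blockOf, mem_filter, mem_insert, mem_union, mem_singleton]
  tauto

theorem exists_blockOf_singleton_eq
    (hpartite : ∀ T ∈ maxFacesOf V X, ∀ i : Fin k, ∃! v : V, v ∈ T ∧ col v = i)
    {T : Finset V} (hT : T ∈ maxFacesOf V X) (a : Fin k) :
    ∃ v, col v = a ∧ blockOf V k col T {a} = {v} := by
  obtain ⟨v, ⟨hvT, hva⟩, hunique⟩ := hpartite T hT a
  refine ⟨v, hva, ext fun u => ?_⟩
  simp only [blockOf, mem_filter, mem_singleton]
  exact ⟨hunique u, fun h => h ▸ ⟨hvT, hva⟩⟩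

theorem colorSum_eq_of_blockOf_eq {T : Finset V} {a : Fin k} {v : V}
    (hv : blockOf V k col T {a} = {v}) (f : V → ℝ) : colorSum V k col T a f = f v := by
  simp only [blockOf, mem_singleton] at hv
  rw [colorSum, hv, sum_singleton]

theorem filter_condTops_blockOf_singleton
    (hpartite : ∀ T ∈ maxFacesOf V X, ∀ i : Fin k, ∃! v : V, v ∈ T ∧ col v = i)
    {T : Finset V} (hT : T ∈ maxFacesOf V X) (a : Fin k) :
    {T' ∈ condTops V X τ | blockOf V k col T' {a} = blockOf V k col T {a}} =
      condTops V X (τ ∪ blockOf V k col T {a}) := by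
  ext T'
  simp only [mem_filter, mem_condTops, union_subset_iff, and_assoc]
  refine and_congr_right fun hT' => and_congr_right fun _ =>
    ⟨fun h => h ▸ blockOf_subset T' {a}, fun h => ?_⟩
  obtain ⟨v, hva, hv⟩ := exists_blockOf_singleton_eq hpartite hT a
  obtain ⟨v', -, hv'⟩ := exists_blockOf_singleton_eq hpartite hT' a
  have hvT' : v ∈ blockOf V k col T' {a} :=
    mem_filter.2 ⟨h (hv ▸ mem_singleton_self v), mem_singleton.2 hva⟩
  rw [hv', mem_singleton] at hvT'
  rw [hv, hv', hvT']

theorem disjoint_image_union_blockOf {A : Finset (Fin k)} {a : Fin k} (ha : a ∉ A)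
    (hA : Disjoint A (τ.image col)) (T : Finset V) :
    Disjoint A ((τ ∪ blockOf V k col T {a}).image col) := by
  rw [image_union, disjoint_union_right]
  refine ⟨hA, disjoint_left.2 fun i hi hiT => ha ?_⟩
  obtain ⟨v, hv, rfl⟩ := mem_image.1 hiT
  rwa [← mem_singleton.1 (mem_filter.1 hv).2]

theorem card_add_two_le_of_notMem_image
    (hpartite : ∀ T ∈ maxFacesOf V X, ∀ i : Fin k, ∃! v : V, v ∈ T ∧ col v = i)
    (hτ : ∃ T ∈ maxFacesOf V X, τ ⊆ T) {a b : Fin k} (hab : a ≠ b)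
    (ha : a ∉ τ.image col) (hb : b ∉ τ.image col) : τ.card + 2 ≤ k := by
  obtain ⟨T, hTmax, hτT⟩ := hτ
  have hinj : Set.InjOn col τ := fun u hu v hv huv =>
    (hpartite T hTmax (col v)).unique ⟨hτT hu, huv⟩ ⟨hτT hv, rfl⟩
  have hcard := card_le_univ (insert a (insert b (τ.image col)))
  rwa [card_insert_of_notMem (by simp only [mem_insert, hab, ha, or_self, not_false_eq_true]),
    card_insert_of_notMem hb, card_image_of_injOn hinj, Fintype.card_fin] at hcard

theorem exists_colorSum_eq
    (hpartite : ∀ T ∈ maxFacesOf V X, ∀ i : Fin k, ∃! v : V, v ∈ T ∧ col v = i)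
    {a b : Fin k} (hab : a ≠ b) (f g : Finset V → ℝ) :
    ∃ h : V → ℝ, ∀ T ∈ maxFacesOf V X, ∀ φ : ℝ → ℝ,
      colorSum V k col T a (fun v => φ (h v)) = φ (f (blockOf V k col T {a})) ∧
        colorSum V k col T b (fun v => φ (h v)) = φ (g (blockOf V k col T {b})) := by
  refine ⟨fun v => if col v = a then f {v} else g {v}, fun T hT φ => ⟨?_, ?_⟩⟩
  · obtain ⟨v, hva, hv⟩ := exists_blockOf_singleton_eq hpartite hT a
    simp only [colorSum_eq_of_blockOf_eq hv, hv, if_pos hva]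
  · obtain ⟨v, hvb, hv⟩ := exists_blockOf_singleton_eq hpartite hT b
    simp only [colorSum_eq_of_blockOf_eq hv, hv, hvb, if_neg hab.symm]

theorem sum_condTops_pos (hcontain : ∀ s ∈ X, ∃ T ∈ maxFacesOf V X, s ⊆ T)
    (hπpos : ∀ T ∈ maxFacesOf V X, 0 < π T) (hτ : τ ∈ X) : 0 < ∑ T ∈ condTops V X τ, π T :=
  sum_pos (fun T hT => hπpos T (mem_condTops.1 hT).1)
    ((hcontain τ hτ).imp fun _ hT => mem_condTops.2 hT)

theorem IsLambdaProduct.two_mul_sum_le (hprod : IsLambdaProduct V k col X π lam) (hτ : τ ∈ X)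
    (hcard : τ.card + 2 ≤ k) (hW : 0 < ∑ T ∈ condTops V X τ, π T) {a b : Fin k} (hab : a ≠ b)
    (ha : a ∉ τ.image col) (hb : b ∉ τ.image col) {f : V → ℝ}
    (hf : ∑ T ∈ condTops V X τ, π T * (colorSum V k col T a f + colorSum V k col T b f) = 0) :
    2 * ∑ T ∈ condTops V X τ, π T * (colorSum V k col T a f * colorSum V k col T b f) ≤
      lam * ∑ T ∈ condTops V X τ, π T * (colorSum V k col T a (fun v => f v ^ 2) +
        colorSum V k col T b (fun v => f v ^ 2)) := by
  have h := hprod τ hτ hcard a b hab ha hb f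
  simp only [← mul_div_assoc, ← sum_div, hf, zero_div, forall_const] at h
  rw [div_le_div_iff_of_pos_right hW] at h
  linarith

/-- The covariance, up to normalization, of `f` of the block with color set `A` and `g` of the
block with color set `B`, for a random maximal face containing `τ`. -/
noncomputable def blockCov (col : V → Fin k) (X : Finset (Finset V)) (π : Finset V → ℝ)
    (τ : Finset V) (A B : Finset (Fin k)) (f g : Finset V → ℝ) : ℝ :=
  weightedCov π (condTops V X τ) (fun T => f (blockOf V k col T A))
    (fun T => g (blockOf V k col T B))

/-- The covariance bound of the induction, for the blocks with color sets `A` and `B` of a random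
maximal face containing `τ`: the form of `Cov ≤ λ √(|A| |B|) σ(F) σ(G)` linearized by AM-GM. -/
def BlockCovBound (col : V → Fin k) (X : Finset (Finset V)) (π : Finset V → ℝ) (lam : ℝ)
    (τ : Finset V) (A B : Finset (Fin k)) : Prop :=
  ∀ f g : Finset V → ℝ,
    2 * blockCov col X π τ A B f g ≤
      lam * B.card * blockCov col X π τ A A f f + lam * A.card * blockCov col X π τ B B g g

theorem BlockCovBound.symm {A B : Finset (Fin k)} (h : BlockCovBound col X π lam τ A B) :
    BlockCovBound col X π lam τ B A := by
  intro f g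
  rw [blockCov, weightedCov_comm, add_comm]
  exact h g f

theorem BlockCovBound.two_mul_blockCov_le {A B : Finset (Fin k)}
    (h : BlockCovBound col X π lam τ A B) (hπ : ∀ T ∈ maxFacesOf V X, 0 ≤ π T) (hlam : 0 ≤ lam)
    {n : ℕ} (hA : A.card ≤ n) (hB : B.card ≤ n) (f g : Finset V → ℝ) :
    2 * blockCov col X π τ A B f g ≤
      n * lam * (blockCov col X π τ A A f f + blockCov col X π τ B B g g) := by
  have hvar : ∀ A f, 0 ≤ blockCov col X π τ A A f f := fun A f =>
    weightedCov_self_nonneg (fun T hT => hπ T (mem_condTops.1 hT).1) _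
  rw [mul_comm (n : ℝ), mul_add]
  refine (h f g).trans (add_le_add ?_ ?_) <;> gcongr
  exacts [hvar A f, hvar B g]

theorem IsLambdaProduct.blockCovBound_singleton (hprod : IsLambdaProduct V k col X π lam)
    (hpartite : ∀ T ∈ maxFacesOf V X, ∀ i : Fin k, ∃! v : V, v ∈ T ∧ col v = i)
    (hcontain : ∀ s ∈ X, ∃ T ∈ maxFacesOf V X, s ⊆ T)
    (hπpos : ∀ T ∈ maxFacesOf V X, 0 < π T) (hτ : τ ∈ X) {a b : Fin k} (hab : a ≠ b)
    (ha : a ∉ τ.image col) (hb : b ∉ τ.image col) :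
    BlockCovBound col X π lam τ {a} {b} := by
  intro f g
  have hw : ∀ T ∈ condTops V X τ, 0 ≤ π T := fun T hT => (hπpos T (mem_condTops.1 hT).1).le
  have hcard : τ.card + 2 ≤ k :=
    card_add_two_le_of_notMem_image hpartite (hcontain τ hτ) hab ha hb
  let F := fun T => f (blockOf V k col T {a})
  let G := fun T => g (blockOf V k col T {b})
  let mF := (condTops V X τ).centerMass π F
  let mG := (condTops V X τ).centerMass π G
  obtain ⟨h, hh⟩ := exists_colorSum_eq hpartite hab (fun t => f t - mF) (fun t => g t - mG)
  have hval : ∀ T ∈ condTops V X τ,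
      colorSum V k col T a h = F T - mF ∧ colorSum V k col T b h = G T - mG :=
    fun T hT => hh T (mem_condTops.1 hT).1 id
  have hval_sq : ∀ T ∈ condTops V X τ,
      colorSum V k col T a (fun v => h v ^ 2) = (F T - mF) ^ 2 ∧
        colorSum V k col T b (fun v => h v ^ 2) = (G T - mG) ^ 2 :=
    fun T hT => hh T (mem_condTops.1 hT).1 (· ^ 2)
  have hmean : ∑ T ∈ condTops V X τ,
      π T * (colorSum V k col T a h + colorSum V k col T b h) = 0 := by
    rw [sum_congr rfl fun T hT => by rw [(hval T hT).1, (hval T hT).2, mul_add], sum_add_distrib,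
      sum_mul_sub_centerMass hw, sum_mul_sub_centerMass hw, add_zero]
  calc 2 * blockCov col X π τ {a} {b} f g
      = 2 * ∑ T ∈ condTops V X τ, π T * (colorSum V k col T a h * colorSum V k col T b h) := by
        congr 1
        exact sum_congr rfl fun T hT => by rw [(hval T hT).1, (hval T hT).2]
    _ ≤ lam * ∑ T ∈ condTops V X τ, π T * (colorSum V k col T a (fun v => h v ^ 2) +
          colorSum V k col T b (fun v => h v ^ 2)) :=
        hprod.two_mul_sum_le hτ hcard (sum_condTops_pos hcontain hπpos hτ) hab ha hb hmean
    _ = lam * ({b} : Finset (Fin k)).card * blockCov col X π τ {a} {a} f f +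
          lam * ({a} : Finset (Fin k)).card * blockCov col X π τ {b} {b} g g := by
        rw [sum_congr rfl fun T hT => by rw [(hval_sq T hT).1, (hval_sq T hT).2, mul_add, sq, sq],
          sum_add_distrib, mul_add]
        simp only [card_singleton, Nat.cast_one, mul_one]
        rfl

theorem BlockCovBound.of_singletons (hdown : ∀ s ∈ X, ∀ t ⊆ s, t ∈ X)
    (hpartite : ∀ T ∈ maxFacesOf V X, ∀ i : Fin k, ∃! v : V, v ∈ T ∧ col v = i)
    (hπ : ∀ T ∈ maxFacesOf V X, 0 ≤ π T) (hlam : 0 ≤ lam) {B : Finset (Fin k)}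
    (hsingle : ∀ τ ∈ X, ∀ a ∉ B, a ∉ τ.image col → Disjoint B (τ.image col) →
      BlockCovBound col X π lam τ {a} B)
    (hτ : τ ∈ X) {A : Finset (Fin k)} (hAB : Disjoint A B) (hA : Disjoint A (τ.image col))
    (hB : Disjoint B (τ.image col)) : BlockCovBound col X π lam τ A B := by
  have hw : ∀ τ, ∀ T ∈ condTops V X τ, 0 ≤ π T := fun τ T hT => hπ T (mem_condTops.1 hT).1
  induction A using Finset.induction_on generalizing τ with
  | empty =>
    intro f g
    have hconst : ∀ B' g', blockCov col X π τ ∅ B' f g' = 0 := fun B' g' => by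
      simp only [blockCov, blockOf, notMem_empty, filter_false, weightedCov_const_left (hw τ)]
    simp only [hconst, card_empty, Nat.cast_zero, mul_zero, zero_mul, add_zero, le_refl]
  | insert a A ha ih =>
    intro f g
    rw [disjoint_insert_left] at hAB hA
    rw [card_insert_of_notMem ha, Nat.cast_add, Nat.cast_one, mul_add]
    refine two_mul_weightedCov_le_of_fibers (hw τ) (fun T => blockOf V k col T {a})
      (by positivity) (fun s hs => ?_) ?_
    · obtain ⟨T, hT, rfl⟩ := mem_image.1 hs
      obtain ⟨hTmax, hτT⟩ := mem_condTops.1 hT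
      have hlink : τ ∪ blockOf V k col T {a} ∈ X :=
        hdown T (mem_filter.1 hTmax).1 _ (union_subset hτT (blockOf_subset T {a}))
      have hblock : ∀ T' ∈ condTops V X (τ ∪ blockOf V k col T {a}),
          f (blockOf V k col T' (insert a A)) =
            f (blockOf V k col T {a} ∪ blockOf V k col T' A) := fun T' hT' => by
        rw [← filter_condTops_blockOf_singleton hpartite hTmax] at hT'
        rw [blockOf_insert, (mem_filter.1 hT').2]
      rw [filter_condTops_blockOf_singleton hpartite hTmax,
        weightedCov_congr hblock hblock, weightedCov_congr_left hblock]
      exact ih hlink hAB.2 (disjoint_image_union_blockOf ha hA.2 T)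
        (disjoint_image_union_blockOf hAB.1 hB T) (fun t => f (blockOf V k col T {a} ∪ t)) g
    · have hmean := hsingle τ hτ a hAB.1 hA.1 hB
        (fun t => {T ∈ condTops V X τ | blockOf V k col T {a} = t}.centerMass π
          fun T => f (blockOf V k col T (insert a A))) g
      rwa [card_singleton, Nat.cast_one] at hmean

theorem IsLambdaProduct.blockCovBound (hprod : IsLambdaProduct V k col X π lam)
    (hdown : ∀ s ∈ X, ∀ t ⊆ s, t ∈ X)
    (hpartite : ∀ T ∈ maxFacesOf V X, ∀ i : Fin k, ∃! v : V, v ∈ T ∧ col v = i)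
    (hcontain : ∀ s ∈ X, ∃ T ∈ maxFacesOf V X, s ⊆ T)
    (hπpos : ∀ T ∈ maxFacesOf V X, 0 < π T) (hlam : 0 ≤ lam) (hτ : τ ∈ X)
    {A B : Finset (Fin k)} (hAB : Disjoint A B) (hA : Disjoint A (τ.image col))
    (hB : Disjoint B (τ.image col)) : BlockCovBound col X π lam τ A B := by
  have hπ : ∀ T ∈ maxFacesOf V X, 0 ≤ π T := fun T hT => (hπpos T hT).le
  refine .of_singletons hdown hpartite hπ hlam (fun τ' hτ' a haB ha hB' => ?_) hτ hAB hA hB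
  refine (BlockCovBound.of_singletons hdown hpartite hπ hlam (fun τ'' hτ'' b hba hb ha' => ?_) hτ'
    (disjoint_singleton_right.2 haB) hB' (disjoint_singleton_left.2 ha)).symm
  exact hprod.blockCovBound_singleton hpartite hcontain hπpos hτ'' (notMem_singleton.1 hba) hb
    (disjoint_singleton_left.1 ha')

end BlockCovariance

section FacesComplex

variable {V : Type} [Fintype V] {k : ℕ} {col : V → Fin k} {X : Finset (Finset V)}
  {π : Finset V → ℝ} {J : Finset (Finset (Fin k))} {σ : Finset (Finset V)}

theorem condTopsF_eq_condTops_biUnion : condTopsF V X σ = condTops V X (σ.biUnion id) := by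
  simp only [condTopsF, condTops, biUnion_subset, id]

theorem disjoint_image_biUnion_of_mem_remColors
    (hJdisj : ∀ c ∈ J, ∀ c' ∈ J, c ≠ c' → Disjoint c c') (hσJ : ∀ s ∈ σ, s.image col ∈ J)
    {c : Finset (Fin k)} (hc : c ∈ remColors V k col J σ) :
    Disjoint c ((σ.biUnion id).image col) := by
  obtain ⟨hcJ, hcσ⟩ := mem_sdiff.1 hc
  simp only [biUnion_image, disjoint_biUnion_right, id]
  exact fun s hs => hJdisj c hcJ _ (hσJ s hs) fun h => hcσ (h ▸ mem_image_of_mem _ hs)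

theorem two_le_card_remColors (hσcard : σ.card + 2 ≤ J.card) :
    2 ≤ (remColors V k col J σ).card := by
  have hle := le_card_sdiff (σ.image fun s => s.image col) J
  have himage : (σ.image fun s => s.image col).card ≤ σ.card := card_image_le
  rw [remColors]
  omega

theorem facesVertExp_eq (f : Finset V → ℝ) :
    facesVertExp V k col X π J σ f =
      (∑ c ∈ remColors V k col J σ, ∑ T ∈ condTops V X (σ.biUnion id),
        π T * f (blockOf V k col T c)) /
      ((remColors V k col J σ).card * ∑ T ∈ condTops V X (σ.biUnion id), π T) := by
  simp only [facesVertExp, condTopsF_eq_condTops_biUnion, ← mul_div_assoc, ← sum_div, mul_sum,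
    div_div]
  rw [sum_comm]

theorem facesPairExp_eq (f g : Finset V → ℝ) :
    facesPairExp V k col X π J σ f g =
      (∑ c ∈ remColors V k col J σ, ∑ c' ∈ (remColors V k col J σ).erase c,
        ∑ T ∈ condTops V X (σ.biUnion id),
          π T * (f (blockOf V k col T c) * g (blockOf V k col T c'))) /
      ((remColors V k col J σ).card * ((remColors V k col J σ).card - 1) *
        ∑ T ∈ condTops V X (σ.biUnion id), π T) := by
  simp only [facesPairExp, condTopsF_eq_condTops_biUnion, ← mul_div_assoc, ← sum_div, mul_sum,
    div_div]
  rw [sum_comm]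
  congr 1
  exact sum_congr rfl fun c _ => sum_comm

theorem facesVertExp_nonneg (hπ : ∀ T ∈ maxFacesOf V X, 0 ≤ π T) {f : Finset V → ℝ}
    (hf : ∀ b, 0 ≤ f b) : 0 ≤ facesVertExp V k col X π J σ f := by
  have hw : ∀ T ∈ condTopsF V X σ, 0 ≤ π T := fun T hT => hπ T (mem_filter.1 hT).1
  exact div_nonneg (sum_nonneg fun T hT => mul_nonneg (hw T hT)
    (div_nonneg (sum_nonneg fun c _ => hf _) (Nat.cast_nonneg _))) (sum_nonneg hw)

end FacesComplex

theorem stmt_12_general {V : Type} [Fintype V] {k : ℕ} {col : V → Fin k}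
    {X : Finset (Finset V)}
    (hdown : ∀ s ∈ X, ∀ t ⊆ s, t ∈ X)
    (hpartite : ∀ T ∈ maxFacesOf V X, ∀ i : Fin k, ∃! v : V, v ∈ T ∧ col v = i)
    (hcontain : ∀ s ∈ X, ∃ T ∈ maxFacesOf V X, s ⊆ T)
    {π : Finset V → ℝ} (hπpos : ∀ T ∈ maxFacesOf V X, 0 < π T)
    {lam : ℝ} (hlam : 0 ≤ lam) (hprod : IsLambdaProduct V k col X π lam)
    {J : Finset (Finset (Fin k))} {n : ℕ} (hJsize : ∀ c ∈ J, c.card ≤ n)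
    (hJdisj : ∀ c ∈ J, ∀ c' ∈ J, c ≠ c' → Disjoint c c')
    {σ : Finset (Finset V)} (hσJ : ∀ s ∈ σ, s.image col ∈ J) (hσX : σ.biUnion id ∈ X)
    (hσcard : σ.card + 2 ≤ J.card)
    {f : Finset V → ℝ} (hmean : facesVertExp V k col X π J σ f = 0) :
    facesPairExp V k col X π J σ f f ≤
      n * lam * facesVertExp V k col X π J σ (fun b => f b ^ 2) := by
  have hπ : ∀ T ∈ maxFacesOf V X, 0 ≤ π T := fun T hT => (hπpos T hT).le
  have hW : 0 < ∑ T ∈ condTops V X (σ.biUnion id), π T := sum_condTops_pos hcontain hπpos hσX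
  have hcard : (2 : ℝ) ≤ (remColors V k col J σ).card := mod_cast two_le_card_remColors hσcard
  have hcard_pos : (0 : ℝ) < (remColors V k col J σ).card := by linarith
  have hcard_sub_pos : (0 : ℝ) < (remColors V k col J σ).card - 1 := by linarith
  have hcov : ∀ c ∈ remColors V k col J σ, ∀ c' ∈ remColors V k col J σ, c ≠ c' →
      2 * blockCov col X π (σ.biUnion id) c c' f f ≤ n * lam *
        (blockCov col X π (σ.biUnion id) c c f f + blockCov col X π (σ.biUnion id) c' c' f f) :=
    fun c hc c' hc' hne =>
      have hcJ := (mem_sdiff.1 hc).1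
      have hcJ' := (mem_sdiff.1 hc').1
      (hprod.blockCovBound hdown hpartite hcontain hπpos hlam hσX (hJdisj c hcJ c' hcJ' hne)
        (disjoint_image_biUnion_of_mem_remColors hJdisj hσJ hc)
        (disjoint_image_biUnion_of_mem_remColors hJdisj hσJ hc')).two_mul_blockCov_le
        hπ hlam (hJsize c hcJ) (hJsize c' hcJ') f f
  rw [facesVertExp_eq, div_eq_zero_iff, or_iff_left (by positivity)] at hmean
  have hle := sum_sum_erase_sum_mul_le (fun T hT => hπ T (mem_condTops.1 hT).1)
    (by positivity) hcov hmean
  rw [facesPairExp_eq, facesVertExp_eq, div_le_iff₀ (by positivity)]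
  exact hle.trans_eq (by field_simp)

/-- If `(X, π)` is a weighted pure `k`-partite complex that is a
`λ`-product, `2r+2 ≤ k`, `(k-r)·λ < 1`, and `J` is a set of `m ≥ 2` pairwise disjoint
`(r+1)`-element color sets, then the colored faces complex `F^J X` is a
`((r+1)·λ/(1-(k-r)·λ))`-one-sided local spectral expander, stated in Rayleigh-quotient
form for the link of each face `σ` of `F^J X` with `|σ| ≤ m - 2`. -/
theorem stmt_12 (V : Type) [Fintype V] (k : ℕ) (hk : 2 ≤ k) (col : V → Fin k)
    (X : Finset (Finset V))
    (hdown : ∀ s ∈ X, ∀ t ⊆ s, t ∈ X)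
    (hpartite : ∀ T ∈ maxFacesOf V X, ∀ i : Fin k, ∃! v : V, v ∈ T ∧ col v = i)
    (hcontain : ∀ s ∈ X, ∃ T ∈ maxFacesOf V X, s ⊆ T)
    (π : Finset V → ℝ)
    (hπpos : ∀ T ∈ maxFacesOf V X, 0 < π T)
    (hπzero : ∀ T ∉ maxFacesOf V X, π T = 0)
    (hπsum : ∑ T ∈ maxFacesOf V X, π T = 1)
    (lam : ℝ) (hlam0 : 0 < lam) (hlam1 : lam < 1)
    (hprod : IsLambdaProduct V k col X π lam)
    (r : ℕ) (hr : 2 * r + 2 ≤ k) (hrlam : ((k : ℝ) - (r : ℝ)) * lam < 1)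
    (J : Finset (Finset (Fin k))) (m : ℕ) (hm : J.card = m) (hm2 : 2 ≤ m)
    (hJsize : ∀ c ∈ J, c.card = r + 1)
    (hJdisj : ∀ c ∈ J, ∀ c' ∈ J, c ≠ c' → Disjoint c c')
    (σ : Finset (Finset V))
    (hσJ : ∀ s ∈ σ, s.image col ∈ J)
    (hσinj : ∀ s ∈ σ, ∀ s' ∈ σ, s ≠ s' → s.image col ≠ s'.image col)
    (hσX : σ.biUnion id ∈ X)
    (hσcard : σ.card + 2 ≤ m)
    (f : Finset V → ℝ)
    (hmean : facesVertExp V k col X π J σ f = 0) :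
    facesPairExp V k col X π J σ f f ≤
      (((r : ℝ) + 1) * lam / (1 - ((k : ℝ) - (r : ℝ)) * lam)) *
        facesVertExp V k col X π J σ (fun b => (f b) ^ 2) := by
  have hrk : (r : ℝ) ≤ k := mod_cast (by omega : r ≤ k)
  have hdenom : 1 - ((k : ℝ) - r) * lam ≤ 1 :=
    sub_le_self _ (mul_nonneg (sub_nonneg.2 hrk) hlam0.le)
  have hconst : ((r + 1 : ℕ) : ℝ) * lam ≤
      ((r : ℝ) + 1) * lam / (1 - ((k : ℝ) - (r : ℝ)) * lam) := by
    push_cast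
    exact le_div_self (by positivity) (sub_pos.2 hrlam) hdenom
  exact (stmt_12_general hdown hpartite hcontain hπpos hlam0.le hprod
    (fun c hc => (hJsize c hc).le) hJdisj hσJ hσX (hm ▸ hσcard) hmean).trans
    (mul_le_mul_of_nonneg_right hconst
      (facesVertExp_nonneg (fun T hT => (hπpos T hT).le) fun b => sq_nonneg (f b)))
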